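/- (Siegel's theorem) For every ε > 0 there exists a constant C(ε) > 0 such that for every integer q > 1 and every primitive quadratic Dirichlet character χ modulo q, the value of the Dirichlet L-function at 1 satisfies L(1,χ) > C(ε)·q^(−ε). (In particular L(1,χ) is a positive real number.) -/

import Mathlib

/-!
Estermann's method. For quadratic characters `χ₁`, `χ₂` with `χ₁χ₂` nontrivial, the Dirichlet series
of `F(s) = ζ(s) L(s, χ₁) L(s, χ₂) L(s, χ₁χ₂)` has nonnegative coefficients and first coefficient
`1`, and `F` is entire except for a simple pole at `1` with residue
`λ = L(1, χ₁) L(1, χ₂) L(1, χ₁χ₂)`. The Taylor coefficients of `F(2 - t)` at `t = 0` are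
nonnegative, the one of order zero is at least `1`, and they exceed by `λ` those of the entire
function `F(2 - t) - λ / (1 - t)`, which Cauchy's estimate bounds using the circle `|t| = 3 / 2`.
If `F(σ) ≤ 0` for some `σ < 1` close to `1`, truncating the expansion at `t = 2 - σ` therefore
forces `λ` to exceed a small negative power of `q₁q₂`.

A suitable pair `χ₁`, `σ` exists in any case: either some quadratic L-function vanishes at a
`σ ∈ [1 - δ, 1)`, and `F(σ) = 0`, or all of them are positive there, and `F(σ)` has the sign of
`ζ(σ) < 0`. As `χ₁` depends only on `δ`, and `L(1, χ₁χ₂)` is at most a small power of `q₁q₂`, this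
bounds `L(1, χ₂)` from below; the dichotomy is what makes the constant ineffective.
-/

namespace Siegel

open Complex Filter Topology Asymptotics MeasureTheory
open scoped ComplexOrder ComplexConjugate

/-! ### Bounds and reality of L-functions -/

/-- Abel's integral `s ∫₁^∞ (∑_{k ≤ t} f k) t^{-s-1} dt`, which represents the L-series of `f` and
continues it to the half-plane where the partial sums of `f` are dominated by `t^{Re s}`. -/
noncomputable def abelIntegral (f : ℕ → ℂ) (s : ℂ) : ℂ :=
  s * ∫ t in Set.Ioi (1 : ℝ), (∑ k ∈ Finset.Icc 1 ⌊t⌋₊, f k) * (t : ℂ) ^ (-(s + 1))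

section AbelIntegral

variable {f : ℕ → ℂ} {r B : ℝ} {s : ℂ}

theorem abelIntegral_eq_mul_mellin (f : ℕ → ℂ) (s : ℂ) :
    abelIntegral f s = s * mellin (fun t : ℝ ↦ ∑ k ∈ Finset.Icc 1 ⌊t⌋₊, f k) (-s) := by
  rw [abelIntegral, mellin, ← integral_Ici_eq_integral_Ioi]
  congr 1
  have hintegrand (t : ℝ) : (∑ k ∈ Finset.Icc 1 ⌊t⌋₊, f k) * (t : ℂ) ^ (-(s + 1)) =
      (t : ℂ) ^ (-s - 1) • ∑ k ∈ Finset.Icc 1 ⌊t⌋₊, f k := by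
    rw [smul_eq_mul, mul_comm, neg_add']
  simp only [hintegrand]
  refine (setIntegral_eq_of_subset_of_forall_sdiff_eq_zero measurableSet_Ioi
    (Set.Ici_subset_Ioi.2 one_pos) fun t ht ↦ ?_).symm
  have ht1 : ⌊t⌋₊ = 0 := Nat.floor_eq_zero.2 (not_le.1 ht.2)
  simp [ht1]

theorem differentiableAt_abelIntegral (hr : 0 ≤ r) (hs : r < s.re)
    (hf : (fun n ↦ ∑ k ∈ Finset.Icc 1 n, f k) =O[atTop] fun n ↦ (n : ℝ) ^ r) :
    DifferentiableAt ℂ (abelIntegral f) s := by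
  have hloc : LocallyIntegrableOn (fun t : ℝ ↦ ∑ k ∈ Finset.Icc 1 ⌊t⌋₊, f k) (Set.Ioi 0) := by
    simpa using (locallyIntegrableOn_mul_sum_Icc (m := 1) f le_rfl
      (continuousOn_const (c := (1 : ℂ)) |>.locallyIntegrableOn measurableSet_Ici)).mono_set
        Set.Ioi_subset_Ici_self
  have htop : (fun t : ℝ ↦ ∑ k ∈ Finset.Icc 1 ⌊t⌋₊, f k) =O[atTop] (· ^ (-(-r))) := by
    rw [neg_neg]
    refine (hf.comp_tendsto tendsto_nat_floor_atTop).trans (.of_bound' ?_)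
    filter_upwards [eventually_ge_atTop 0] with t ht
    have hfloor : (0 : ℝ) ≤ ⌊t⌋₊ := Nat.cast_nonneg _
    simpa [abs_of_nonneg (Real.rpow_nonneg ht r), abs_of_nonneg (Real.rpow_nonneg hfloor r)] using
      Real.rpow_le_rpow hfloor (Nat.floor_le ht) hr
  have hzero : (fun t : ℝ ↦ ∑ k ∈ Finset.Icc 1 ⌊t⌋₊, f k) =O[𝓝[>] 0]
      (· ^ (-(-s.re - 1))) := by
    refine EventuallyEq.trans_isBigO ?_ (isBigO_zero _ _)
    filter_upwards [nhdsWithin_le_nhds (eventually_lt_nhds one_pos)] with t ht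
    simp [Nat.floor_eq_zero.2 ht]
  have hmellin := mellin_differentiableAt_of_isBigO_rpow (s := -s) hloc htop
    (by simpa using hs) hzero (by simp)
  rw [funext (abelIntegral_eq_mul_mellin f)]
  exact differentiableAt_id.mul (hmellin.comp s differentiableAt_id.neg)

theorem norm_abelIntegral_le (hr : 0 ≤ r) (hs : r < s.re)
    (hf : ∀ n : ℕ, ‖∑ k ∈ Finset.Icc 1 n, f k‖ ≤ B * (n : ℝ) ^ r) :
    ‖abelIntegral f s‖ ≤ ‖s‖ * (B / (s.re - r)) := by
  have hexp : r - s.re - 1 < -1 := by linarith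
  have hB : 0 ≤ B := by simpa using (norm_nonneg _).trans (hf 1)
  have hint : ∫ t in Set.Ioi (1 : ℝ), B * t ^ (r - s.re - 1) = B / (s.re - r) := by
    rw [integral_const_mul, integral_Ioi_rpow_of_lt hexp one_pos, Real.one_rpow,
      show r - s.re - 1 + 1 = -(s.re - r) by ring, neg_div_neg_eq, mul_one_div]
  rw [abelIntegral, norm_mul, ← hint]
  refine mul_le_mul_of_nonneg_left (norm_integral_le_of_norm_le
    ((integrableOn_Ioi_rpow_of_lt hexp one_pos).const_mul B) ?_) (norm_nonneg s)
  filter_upwards [ae_restrict_mem measurableSet_Ioi] with t ht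
  have ht0 : 0 < t := one_pos.trans ht
  calc ‖(∑ k ∈ Finset.Icc 1 ⌊t⌋₊, f k) * (t : ℂ) ^ (-(s + 1))‖
      ≤ B * t ^ r * t ^ (-(s.re + 1)) := by
        rw [norm_mul, norm_cpow_eq_rpow_re_of_pos ht0]
        gcongr
        · exact (hf _).trans (by gcongr; exact Nat.floor_le ht0.le)
        · exact ht.le
        · simp
    _ = B * t ^ (r - s.re - 1) := by
        rw [mul_assoc, ← Real.rpow_add ht0]
        ring_nf

end AbelIntegral

section PartialSums

theorem norm_sum_Icc_le_self {q : ℕ} (χ : DirichletCharacter ℂ q) (n : ℕ) :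
    ‖∑ k ∈ Finset.Icc 1 n, χ k‖ ≤ n :=
  (norm_sum_le_of_le (f := fun k : ℕ ↦ χ k) _ fun k _ ↦ χ.norm_le_one k).trans (by simp)

variable {q : ℕ} [NeZero q] {χ : DirichletCharacter ℂ q}

theorem sum_Icc_eq_sum_zmod {M : Type*} [AddCommMonoid M] (g : ZMod q → M) :
    ∑ k ∈ Finset.Icc 1 q, g k = ∑ a, g a := by
  calc ∑ k ∈ Finset.Icc 1 q, g k
      = ∑ k ∈ Finset.range q, g ((1 : ZMod q) + (k : ZMod q)) := by
        rw [← Finset.Ico_add_one_right_eq_Icc, Finset.sum_Ico_eq_sum_range]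
        simp
    _ = ∑ a, g (1 + a) := by
        refine Finset.sum_bij' (fun k _ ↦ (k : ZMod q)) (fun a _ ↦ a.val) ?_ ?_ ?_ ?_ ?_
        · simp
        · simpa using fun a ↦ ZMod.val_lt a
        · exact fun k hk ↦ ZMod.val_cast_of_lt (Finset.mem_range.1 hk)
        · simp
        · simp
    _ = ∑ a, g a := Equiv.sum_comp (Equiv.addLeft 1) g

theorem periodic_sum_Icc (hχ : χ ≠ 1) :
    Function.Periodic (fun n : ℕ ↦ ∑ k ∈ Finset.Icc 1 n, χ k) q := by
  intro n
  induction n with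
  | zero => simpa [sum_Icc_eq_sum_zmod] using χ.sum_eq_zero_of_ne_one hχ
  | succ n ih =>
    simp only at ih
    simp only [Nat.add_right_comm n 1 q, Finset.sum_Icc_succ_top (Nat.le_add_left 1 _), ih]
    simp

theorem norm_sum_Icc_le (hχ : χ ≠ 1) (n : ℕ) : ‖∑ k ∈ Finset.Icc 1 n, χ k‖ ≤ q := by
  rw [← (periodic_sum_Icc hχ).map_mod_nat n]
  exact (norm_sum_Icc_le_self χ _).trans (by exact_mod_cast (n.mod_lt (NeZero.pos q)).le)

theorem norm_sum_Icc_le_rpow_mul_rpow (hχ : χ ≠ 1) {η : ℝ} (h0 : 0 ≤ η) (h1 : η ≤ 1) (n : ℕ) :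
    ‖∑ k ∈ Finset.Icc 1 n, χ k‖ ≤ (q : ℝ) ^ η * (n : ℝ) ^ (1 - η) := by
  have hη : 0 ≤ 1 - η := sub_nonneg.2 h1
  calc ‖∑ k ∈ Finset.Icc 1 n, χ k‖
      = ‖∑ k ∈ Finset.Icc 1 n, χ k‖ ^ η * ‖∑ k ∈ Finset.Icc 1 n, χ k‖ ^ (1 - η) := by
        rw [← Real.rpow_add_of_nonneg (norm_nonneg _) h0 hη, add_sub_cancel, Real.rpow_one]
    _ ≤ (q : ℝ) ^ η * (n : ℝ) ^ (1 - η) := by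
        gcongr
        exacts [norm_sum_Icc_le hχ n, norm_sum_Icc_le_self χ n]

theorem LFunction_eq_abelIntegral (hχ : χ ≠ 1) {s : ℂ} (hs : 0 < s.re) :
    χ.LFunction s = abelIntegral (χ ·) s := by
  have hO : (fun n : ℕ ↦ ∑ k ∈ Finset.Icc 1 n, χ k) =O[atTop] fun n ↦ (n : ℝ) ^ (0 : ℝ) :=
    .of_bound q (.of_forall fun n ↦ by simpa using norm_sum_Icc_le hχ n)
  have hopen (x : ℝ) : IsOpen {s : ℂ | x < s.re} := isOpen_lt continuous_const continuous_re
  have hL : AnalyticOnNhd ℂ χ.LFunction {s : ℂ | 0 < s.re} :=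
    (DirichletCharacter.differentiable_LFunction hχ).differentiableOn.analyticOnNhd (hopen 0)
  have hI : AnalyticOnNhd ℂ (abelIntegral (χ ·)) {s : ℂ | 0 < s.re} :=
    DifferentiableOn.analyticOnNhd
      (fun s hs ↦ (differentiableAt_abelIntegral le_rfl hs hO).differentiableWithinAt) (hopen 0)
  refine hL.eqOn_of_preconnected_of_eventuallyEq hI (convex_halfSpace_re_gt 0).isPreconnected
    (z₀ := 2) (by simp) ?_ hs
  filter_upwards [(hopen 1).mem_nhds (show (2 : ℂ) ∈ {s : ℂ | 1 < s.re} by simp)] with z hz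
  have hz' : 1 < z.re := hz
  rw [χ.LFunction_eq_LSeries hz', abelIntegral, LSeries_eq_mul_integral _ le_rfl (by linarith)
    (χ.LSeriesSummable_of_one_lt_re hz') hO]

theorem norm_LFunction_le (hχ : χ ≠ 1) {s : ℂ} (hs : 0 < s.re) :
    ‖χ.LFunction s‖ ≤ ‖s‖ * (q / s.re) := by
  simpa [LFunction_eq_abelIntegral hχ hs] using
    norm_abelIntegral_le le_rfl hs fun n ↦ by simpa using norm_sum_Icc_le hχ n

theorem norm_LFunction_one_le (hχ : χ ≠ 1) {η : ℝ} (h0 : 0 < η) (h1 : η ≤ 1) :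
    ‖χ.LFunction 1‖ ≤ (q : ℝ) ^ η / η := by
  simpa [LFunction_eq_abelIntegral hχ] using norm_abelIntegral_le (s := 1) (sub_nonneg.2 h1)
    (by simpa using h0) (norm_sum_Icc_le_rpow_mul_rpow hχ h0.le h1)

end PartialSums

section Real

variable {q : ℕ} [NeZero q] {χ : DirichletCharacter ℂ q}

theorem conj_LSeries (f : ℕ → ℂ) (s : ℂ) :
    conj (LSeries f s) = LSeries (fun n ↦ conj (f n)) (conj s) := by
  rw [LSeries, LSeries, conj_tsum]
  refine tsum_congr fun n ↦ ?_
  have hn : (n : ℂ).arg ≠ Real.pi := by simpa using Real.pi_ne_zero.symm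
  rcases eq_or_ne n 0 with rfl | h0
  · simp
  · simp [LSeries.term_of_ne_zero h0, cpow_conj _ _ hn]

theorem conj_LFunction (hχ : χ ≠ 1) (s : ℂ) :
    conj (χ.LFunction s) = χ⁻¹.LFunction (conj s) := by
  have hdiff : Differentiable ℂ fun z ↦ conj (χ.LFunction (conj z)) := fun z ↦
    differentiableAt_conj_conj_iff.2 (DirichletCharacter.differentiable_LFunction hχ (conj z))
  have heq : (fun z ↦ conj (χ.LFunction (conj z))) = χ⁻¹.LFunction := by
    refine AnalyticOnNhd.eq_of_eventuallyEq (z₀ := 2) (fun z _ ↦ hdiff.analyticAt z)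
      (fun z _ ↦ (DirichletCharacter.differentiable_LFunction (inv_ne_one.2 hχ)).analyticAt z) ?_
    filter_upwards [(isOpen_lt continuous_const continuous_re).mem_nhds
      (show (2 : ℂ) ∈ {s : ℂ | 1 < s.re} by simp)] with z hz
    have hz' : 1 < z.re := hz
    rw [χ.LFunction_eq_LSeries (by simpa using hz'), χ⁻¹.LFunction_eq_LSeries hz', conj_LSeries,
      conj_conj]
    simp_rw [← MulChar.star_apply', starRingEnd_apply]
  simpa using congrFun heq (conj s)

theorem ofReal_re_LFunction (hχ : χ ≠ 1) (hquad : χ.IsQuadratic) (x : ℝ) :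
    ((χ.LFunction x).re : ℂ) = χ.LFunction x := by
  rw [← conj_eq_iff_re, conj_LFunction hχ, hquad.inv, conj_ofReal]

end Real

/-! ### Positivity of the coefficients -/

/-- A Dirichlet character viewed as an element of the ring of arithmetic functions. -/
noncomputable def charCoeff {q : ℕ} (χ : DirichletCharacter ℂ q) : ArithmeticFunction ℂ :=
  toArithmeticFunction fun n ↦ χ n

section CharCoeff

variable {q : ℕ} {s : ℂ}

theorem charCoeff_apply (χ : DirichletCharacter ℂ q) {n : ℕ} (hn : n ≠ 0) : charCoeff χ n = χ n :=
  (χ.apply_eq_toArithmeticFunction_apply hn).symm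

theorem LSeriesSummable_charCoeff (χ : DirichletCharacter ℂ q) (hs : 1 < s.re) :
    LSeriesSummable (charCoeff χ) s :=
  (LSeriesSummable_congr s (charCoeff_apply χ)).2 (χ.LSeriesSummable_of_one_lt_re hs)

theorem LSeries_charCoeff [NeZero q] (χ : DirichletCharacter ℂ q) (hs : 1 < s.re) :
    LSeries (charCoeff χ) s = χ.LFunction s :=
  (LSeries_congr (charCoeff_apply χ) s).trans (χ.LFunction_eq_LSeries hs).symm

theorem LSeries_zetaMul [NeZero q] (χ : DirichletCharacter ℂ q) (hs : 1 < s.re) :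
    LSeries χ.zetaMul s = riemannZeta s * χ.LFunction s := by
  rw [← LSeries_charCoeff χ hs, ← ArithmeticFunction.LSeries_zeta_eq_riemannZeta hs]
  exact ArithmeticFunction.LSeries_mul' (ArithmeticFunction.LSeriesSummable_zeta_iff.2 hs)
    (LSeriesSummable_charCoeff χ hs)

end CharCoeff

section Positivity

variable {q : ℕ} [NeZero q] {χ : DirichletCharacter ℂ q}

theorem re_LFunction_pos_of_one_lt (hquad : χ.IsQuadratic) {x : ℝ} (hx : 1 < x) :
    0 < (χ.LFunction x).re := by
  obtain ⟨y, hy1, hyx⟩ := exists_between hx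
  have hpos : 0 < LSeries χ.zetaMul x :=
    LSeries.positive (DirichletCharacter.zetaMul_nonneg hquad.sq_eq_one)
      (by simp [(DirichletCharacter.isMultiplicative_zetaMul χ).map_one])
      ((χ.LSeriesSummable_zetaMul (s := y) hy1).abscissaOfAbsConv_le.trans_lt
        (EReal.coe_lt_coe hyx))
  rw [LSeries_zetaMul χ hx] at hpos
  exact (pos_of_mul_pos_right hpos (riemannZeta_pos_of_one_lt hx).le).1

theorem re_LFunction_pos_of_forall_ne_zero (hχ : χ ≠ 1) (hquad : χ.IsQuadratic) {σ : ℝ}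
    (hne : ∀ x : ℝ, σ ≤ x → χ.LFunction x ≠ 0) : 0 < (χ.LFunction σ).re := by
  have hcont : Continuous fun x : ℝ ↦ (χ.LFunction x).re :=
    continuous_re.comp ((DirichletCharacter.differentiable_LFunction hχ).continuous.comp
      continuous_ofReal)
  by_contra! hσ
  obtain ⟨x, hx, hzero : (χ.LFunction x).re = 0⟩ :=
    intermediate_value_Icc (le_max_left σ 2) hcont.continuousOn
      ⟨hσ, (re_LFunction_pos_of_one_lt hquad (by simp : (1 : ℝ) < max σ 2)).le⟩
  exact hne x hx.1 (by rw [← ofReal_re_LFunction hχ hquad, hzero, ofReal_zero])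

theorem re_LFunction_one_pos (hχ : χ ≠ 1) (hquad : χ.IsQuadratic) :
    0 < (χ.LFunction 1).re := by
  simpa using re_LFunction_pos_of_forall_ne_zero (σ := 1) hχ hquad fun x hx ↦
    χ.LFunction_ne_zero_of_one_le_re (.inl hχ) (by simpa using hx)

end Positivity

/-- Multiplication of coefficients by `log n`, that is, minus the derivative of the L-series. -/
noncomputable def logMul (f : ArithmeticFunction ℂ) : ArithmeticFunction ℂ :=
  ⟨fun n ↦ Complex.log n * f n, by simp⟩

/-- The coefficients `χ n * Λ n` of `-L'/L`. -/
noncomputable def twistedVonMangoldt {q : ℕ} (χ : DirichletCharacter ℂ q) :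
    ArithmeticFunction ℂ :=
  toArithmeticFunction fun n ↦ χ n * (ArithmeticFunction.vonMangoldt n : ℂ)

section LogDerivative

theorem logMul_apply (f : ArithmeticFunction ℂ) (n : ℕ) : logMul f n = Real.log n * f n := by
  rw [natCast_log]
  rfl

theorem logMul_mul (f g : ArithmeticFunction ℂ) :
    logMul (f * g) = logMul f * g + f * logMul g := by
  ext n
  simp only [logMul_apply, ArithmeticFunction.add_apply, ArithmeticFunction.mul_apply,
    Finset.mul_sum, ← Finset.sum_add_distrib]
  refine Finset.sum_congr rfl fun p hp ↦ ?_
  obtain ⟨hmul, hn⟩ := Nat.mem_divisorsAntidiagonal.1 hp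
  obtain ⟨hp1, hp2⟩ := mul_ne_zero_iff.1 (hmul ▸ hn)
  rw [← hmul, Nat.cast_mul, Real.log_mul (by exact_mod_cast hp1) (by exact_mod_cast hp2)]
  push_cast
  ring

theorem logMul_charCoeff {q : ℕ} (χ : DirichletCharacter ℂ q) :
    logMul (charCoeff χ) = twistedVonMangoldt χ * charCoeff χ := by
  ext n
  rcases eq_or_ne n 0 with rfl | hn
  · simp
  · have h := congrFun (DirichletCharacter.convolution_twist_vonMangoldt χ) n
    refine Eq.trans ?_ h.symm
    simp [logMul, charCoeff_apply χ hn, mul_comm]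

theorem nonneg_of_logMul_eq_mul {f g : ArithmeticFunction ℂ} (h : logMul f = g * f)
    (hg1 : g 1 = 0) (hg : ∀ n, 0 ≤ g n) (hf1 : 0 ≤ f 1) (n : ℕ) : 0 ≤ f n := by
  induction n using Nat.strong_induction_on with
  | _ n ih =>
    obtain rfl | rfl | hn : n = 0 ∨ n = 1 ∨ 1 < n := by omega
    · simp
    · exact hf1
    have hlog : (0 : ℂ) < Real.log n := mod_cast Real.log_pos (by exact_mod_cast hn)
    refine le_of_mul_le_mul_left ?_ hlog
    rw [mul_zero, ← logMul_apply, h, ArithmeticFunction.mul_apply]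
    refine Finset.sum_nonneg fun p hp ↦ ?_
    have hmul := (Nat.mem_divisorsAntidiagonal.1 hp).1
    obtain h1 | h1 | h1 : p.1 = 0 ∨ p.1 = 1 ∨ 1 < p.1 := by omega
    · simp [h1]
    · simp [h1, hg1]
    · exact mul_nonneg (hg _) (ih _ (by nlinarith))

end LogDerivative

section ProductCharacter

variable {q₁ q₂ : ℕ} {χ₁ : DirichletCharacter ℂ q₁} {χ₂ : DirichletCharacter ℂ q₂}

theorem mul_apply_natCast (χ₁ : DirichletCharacter ℂ q₁) (χ₂ : DirichletCharacter ℂ q₂) (n : ℕ) :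
    (χ₁.mul χ₂) n = χ₁ n * χ₂ n := by
  rw [DirichletCharacter.mul, MulChar.mul_apply]
  by_cases hn : IsUnit (n : ZMod (q₁.lcm q₂))
  · obtain ⟨u, hu⟩ := hn
    rw [← hu, DirichletCharacter.changeLevel_eq_cast_of_dvd,
      DirichletCharacter.changeLevel_eq_cast_of_dvd, hu, ZMod.cast_natCast (Nat.dvd_lcm_left ..),
      ZMod.cast_natCast (Nat.dvd_lcm_right ..)]
  · rw [MulChar.map_nonunit _ hn, zero_mul, eq_comm, mul_eq_zero]
    contrapose! hn
    have h1 := (ZMod.isUnit_iff_coprime n q₁).1 (not_not.1 fun hn' ↦ hn.1 (χ₁.map_nonunit hn'))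
    have h2 := (ZMod.isUnit_iff_coprime n q₂).1 (not_not.1 fun hn' ↦ hn.2 (χ₂.map_nonunit hn'))
    exact (ZMod.isUnit_iff_coprime n _).2 ((h1.mul_right h2).of_dvd_right (Nat.lcm_dvd_mul ..))

theorem isQuadratic_mul (h₁ : χ₁.IsQuadratic) (h₂ : χ₂.IsQuadratic) :
    (χ₁.mul χ₂).IsQuadratic := by
  rw [MulChar.isQuadratic_iff_sq_eq_one, DirichletCharacter.mul, mul_pow, ← map_pow, ← map_pow,
    h₁.sq_eq_one, h₂.sq_eq_one, map_one, map_one, one_mul]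

instance neZero_lcm (m n : ℕ) [NeZero m] [NeZero n] : NeZero (m.lcm n) :=
  ⟨Nat.lcm_ne_zero (NeZero.ne m) (NeZero.ne n)⟩

theorem mul_ne_one_of_conductor_ne [NeZero q₁] [NeZero q₂] (h : χ₁.conductor ≠ χ₂.conductor) :
    χ₁.mul χ₂ ≠ 1 := by
  intro hmul
  rw [DirichletCharacter.mul, mul_eq_one_iff_eq_inv] at hmul
  apply h
  simpa [DirichletCharacter.conductor_inv, DirichletCharacter.conductor_changeLevel] using
    congrArg DirichletCharacter.conductor hmul

end ProductCharacter

/-- The Dirichlet coefficients of `ζ(s) L(s, χ₁) L(s, χ₂) L(s, χ₁χ₂)`, which for independent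
quadratic characters is the zeta function of a biquadratic field up to finitely many Euler factors.
The factor `ζ` enters as the L-function of the trivial character modulo `1`. -/
noncomputable def biquadraticCoeff {q₁ q₂ : ℕ} (χ₁ : DirichletCharacter ℂ q₁)
    (χ₂ : DirichletCharacter ℂ q₂) : ArithmeticFunction ℂ :=
  charCoeff (1 : DirichletCharacter ℂ 1) * (charCoeff χ₁ * (charCoeff χ₂ * charCoeff (χ₁.mul χ₂)))

/-- The product `L(s, χ₁) L(s, χ₂) L(s, χ₁χ₂)`. -/
noncomputable def tripleLFunction {q₁ q₂ : ℕ} [NeZero q₁] [NeZero q₂]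
    (χ₁ : DirichletCharacter ℂ q₁) (χ₂ : DirichletCharacter ℂ q₂) (s : ℂ) : ℂ :=
  χ₁.LFunction s * (χ₂.LFunction s * (χ₁.mul χ₂).LFunction s)

section Biquadratic

variable {q₁ q₂ : ℕ} (χ₁ : DirichletCharacter ℂ q₁) (χ₂ : DirichletCharacter ℂ q₂) {s : ℂ}

theorem biquadraticCoeff_one : biquadraticCoeff χ₁ χ₂ 1 = 1 := by
  simp only [biquadraticCoeff, ArithmeticFunction.mul_apply_one, charCoeff_apply _ one_ne_zero,
    Nat.cast_one, map_one, mul_one]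

theorem logMul_biquadraticCoeff : logMul (biquadraticCoeff χ₁ χ₂) =
    (twistedVonMangoldt (1 : DirichletCharacter ℂ 1) + twistedVonMangoldt χ₁ +
      twistedVonMangoldt χ₂ + twistedVonMangoldt (χ₁.mul χ₂)) * biquadraticCoeff χ₁ χ₂ := by
  simp only [biquadraticCoeff, logMul_mul, logMul_charCoeff]
  ring

theorem twistedVonMangoldt_apply {q : ℕ} (χ : DirichletCharacter ℂ q) (n : ℕ) :
    twistedVonMangoldt χ n = χ n * (ArithmeticFunction.vonMangoldt n : ℂ) := by
  rcases eq_or_ne n 0 with rfl | hn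
  · simp
  · simp [twistedVonMangoldt, toArithmeticFunction, hn]

variable {χ₁ χ₂} in
theorem biquadraticCoeff_nonneg (h₁ : χ₁.IsQuadratic) (h₂ : χ₂.IsQuadratic) (n : ℕ) :
    0 ≤ biquadraticCoeff χ₁ χ₂ n := by
  refine nonneg_of_logMul_eq_mul (logMul_biquadraticCoeff χ₁ χ₂) ?_ (fun k ↦ ?_)
    (by simp [biquadraticCoeff_one]) n
  · simp [twistedVonMangoldt_apply]
  have hΛ : (0 : ℂ) ≤ (ArithmeticFunction.vonMangoldt k : ℂ) :=
    mod_cast ArithmeticFunction.vonMangoldt_nonneg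
  have hone : (1 : DirichletCharacter ℂ 1) k = 1 := MulChar.one_apply (isUnit_of_subsingleton _)
  simp only [ArithmeticFunction.add_apply, twistedVonMangoldt_apply, mul_apply_natCast, hone,
    ← add_mul]
  refine mul_nonneg ?_ hΛ
  rcases h₁ k with h | h | h <;> rcases h₂ k with h' | h' | h' <;> norm_num [h, h']

theorem LSeriesSummable_biquadraticCoeff (hs : 1 < s.re) :
    LSeriesSummable (biquadraticCoeff χ₁ χ₂) s :=
  ArithmeticFunction.LSeriesSummable_mul (LSeriesSummable_charCoeff _ hs) <|
    ArithmeticFunction.LSeriesSummable_mul (LSeriesSummable_charCoeff _ hs) <|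
      ArithmeticFunction.LSeriesSummable_mul (LSeriesSummable_charCoeff _ hs)
        (LSeriesSummable_charCoeff _ hs)

theorem LSeries_biquadraticCoeff [NeZero q₁] [NeZero q₂] (hs : 1 < s.re) :
    LSeries (biquadraticCoeff χ₁ χ₂) s = riemannZeta s * tripleLFunction χ₁ χ₂ s := by
  have h {q : ℕ} (χ : DirichletCharacter ℂ q) := LSeriesSummable_charCoeff χ hs
  have h₂₃ := ArithmeticFunction.LSeriesSummable_mul (h χ₂) (h (χ₁.mul χ₂))
  have h₁₂₃ := ArithmeticFunction.LSeriesSummable_mul (h χ₁) h₂₃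
  rw [biquadraticCoeff, ArithmeticFunction.LSeries_mul' (h _) h₁₂₃,
    ArithmeticFunction.LSeries_mul' (h _) h₂₃, ArithmeticFunction.LSeries_mul' (h _) (h _)]
  simp only [LSeries_charCoeff _ hs, DirichletCharacter.LFunction_modOne_eq, tripleLFunction]

end Biquadratic

/-! ### Estermann's inequality -/

/-- The real part of the coefficient of `t ^ m` in the Taylor expansion of `t ↦ f (c - t)` at `0`.
For the L-series of a nonnegative sequence and real `c` these coefficients are nonnegative. -/
noncomputable def reflectedTaylorCoeff (f : ℂ → ℂ) (c : ℂ) (m : ℕ) : ℝ :=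
  ((-1) ^ m * iteratedDeriv m f c / (m.factorial : ℂ)).re

section Taylor

variable {f g : ℂ → ℂ} {a : ℕ → ℂ}

theorem hasSum_reflectedTaylorCoeff (hf : Differentiable ℂ f) (c : ℂ) (t : ℝ) :
    HasSum (fun m ↦ reflectedTaylorCoeff f c m * t ^ m) (f (c - t)).re := by
  refine (hasSum_re (Complex.hasSum_taylorSeries_of_entire hf c (c - t))).congr_fun fun m ↦ ?_
  rw [reflectedTaylorCoeff, ← re_mul_ofReal]
  congr 1
  rw [sub_sub_cancel_left, neg_pow, smul_eq_mul, smul_eq_mul, ofReal_pow]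
  ring

theorem abs_reflectedTaylorCoeff_le (hf : Differentiable ℂ f) {c : ℂ} {R K : ℝ} (hR : 0 < R)
    (hK : ∀ s ∈ Metric.sphere c R, ‖f s‖ ≤ K) (m : ℕ) :
    |reflectedTaylorCoeff f c m| ≤ K * R⁻¹ ^ m := by
  have h := norm_iteratedDeriv_le_of_forall_mem_sphere_norm_le m hR hf.diffContOnCl hK
  refine (abs_re_le_norm _).trans ?_
  rw [norm_div, norm_mul, norm_pow, norm_neg, norm_one, one_pow, one_mul, norm_natCast,
    div_le_iff₀ (by positivity)]
  refine h.trans_eq ?_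
  rw [inv_pow]
  ring

theorem reflectedTaylorCoeff_add_mul_inv_sub_one (hf : Differentiable ℂ f) {l : ℂ}
    (hg : ∀ᶠ s in 𝓝 2, g s = f s + l * (s - 1)⁻¹) (m : ℕ) :
    reflectedTaylorCoeff g 2 m = reflectedTaylorCoeff f 2 m + l.re := by
  have hinv : ContDiffAt ℂ m (fun s : ℂ ↦ (s - 1)⁻¹) 2 := .inv (by fun_prop) (by norm_num)
  have hpole : iteratedDeriv m (fun s : ℂ ↦ (s - 1)⁻¹) 2 = (-1) ^ m * m.factorial := by
    have h := congrFun (iter_deriv_inv_linear_sub m (1 : ℂ) 1) 2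
    norm_num [← iteratedDeriv_eq_iterate] at h
    exact h
  have hm : (m.factorial : ℂ) ≠ 0 := mod_cast m.factorial_ne_zero
  rw [reflectedTaylorCoeff, reflectedTaylorCoeff, ← add_re, EventuallyEq.iteratedDeriv_eq m hg,
    iteratedDeriv_fun_add hf.contDiff.contDiffAt (contDiffAt_const.mul hinv),
    iteratedDeriv_const_mul _ hinv, hpole, mul_add, add_div]
  congr 2
  rw [div_eq_iff hm, mul_left_comm, ← mul_assoc ((-1 : ℂ) ^ m), ← mul_pow]
  simp

theorem reflectedTaylorCoeff_LSeries_nonneg (ha : 0 ≤ a) {x : ℝ}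
    (hx : LSeries.abscissaOfAbsConv a < x) (m : ℕ) :
    0 ≤ reflectedTaylorCoeff (LSeries a) x m := by
  rw [reflectedTaylorCoeff, div_natCast_re]
  exact div_nonneg (LSeries.iteratedDeriv_alternating ha hx m).1 (by positivity)

theorem le_re_LSeries (ha : 0 ≤ a) {x : ℝ} (hx : LSeriesSummable a x) :
    (a 1).re ≤ (LSeries a x).re := by
  simpa [LSeries] using (hx.le_tsum 1 fun n _ ↦ LSeries.term_nonneg (ha n) x).1

end Taylor

section PowerSeries

variable {t Y : ℝ}

-- The partial sums of `∑ (c m + l) t ^ m` are at least `1`; on the other hand the first `M` terms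
-- of `∑ c m t ^ m` add up to at most `v + 1 / 2`, as the tail is dominated by `K ∑ (3 / 4) ^ m`.
theorem half_sub_one_le_mul_pow {c : ℕ → ℝ} {K l v : ℝ} {M : ℕ} (ht1 : 1 < t) (ht2 : t ≤ 9 / 8)
    (hc : ∀ m, |c m| ≤ K * (2 / 3) ^ m) (hcl : ∀ m, 0 ≤ c m + l) (hc0 : 1 ≤ c 0 + l)
    (hv : HasSum (fun m ↦ c m * t ^ m) v) (hvl : v ≤ l / (t - 1)) (hM : 1 ≤ M)
    (hKM : 8 * K * (3 / 4) ^ M ≤ 1) : (t - 1) / 2 ≤ l * t ^ M := by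
  have ht : 0 < t - 1 := by linarith
  have hterm (m : ℕ) : ‖c m * t ^ m‖ ≤ K * (3 / 4) ^ m := by
    calc ‖c m * t ^ m‖ ≤ K * (2 / 3) ^ m * (9 / 8) ^ m := by
          rw [norm_mul, norm_pow, Real.norm_eq_abs, Real.norm_of_nonneg (by linarith)]
          gcongr
          exacts [(abs_nonneg _).trans (hc m), hc m]
      _ = K * (3 / 4) ^ m := by rw [mul_assoc, ← mul_pow]; norm_num
  have htail : ∑ m ∈ Finset.range M, c m * t ^ m - v ≤ 1 / 2 := by
    have h := (le_abs_self _).trans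
      (norm_sub_le_of_geometric_bound_of_hasSum (by norm_num) hterm hv M)
    rw [show K * (3 / 4) ^ M / (1 - 3 / 4) = 8 * K * (3 / 4) ^ M / 2 by ring] at h
    linarith
  have hhead : 1 ≤ ∑ m ∈ Finset.range M, c m * t ^ m + l * ((t ^ M - 1) / (t - 1)) := by
    calc (1 : ℝ) ≤ (c 0 + l) * t ^ 0 := by simpa using hc0
      _ ≤ ∑ m ∈ Finset.range M, (c m + l) * t ^ m :=
        Finset.single_le_sum (f := fun m ↦ (c m + l) * t ^ m)
          (fun m _ ↦ mul_nonneg (hcl m) (by positivity)) (Finset.mem_range.2 hM)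
      _ = ∑ m ∈ Finset.range M, c m * t ^ m + l * ((t ^ M - 1) / (t - 1)) := by
        rw [← geom_sum_eq ht1.ne', Finset.mul_sum, ← Finset.sum_add_distrib]
        exact Finset.sum_congr rfl fun m _ ↦ add_mul ..
  have hsum : 1 / 2 ≤ l * t ^ M / (t - 1) := by
    calc (1 : ℝ) / 2 ≤ l / (t - 1) + l * ((t ^ M - 1) / (t - 1)) := by linarith
      _ = l * t ^ M / (t - 1) := by ring
  rw [le_div_iff₀ ht] at hsum
  linarith

theorem exists_pow_le_rpow (ht : 1 ≤ t) (hY : 1 ≤ Y) :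
    ∃ M : ℕ, 1 ≤ M ∧ Y * (3 / 4) ^ M ≤ 1 ∧ t ^ M ≤ (4 / 3 * Y) ^ (4 * (t - 1)) := by
  obtain ⟨n, hn1, hn2⟩ := exists_nat_pow_near hY (by norm_num : (1 : ℝ) < 4 / 3)
  have hbase : t ≤ (4 / 3 : ℝ) ^ (4 * (t - 1)) := by
    have hlog : (1 / 4 : ℝ) ≤ Real.log (4 / 3) := by
      have h := Real.one_sub_inv_le_log_of_pos (show (0 : ℝ) < 4 / 3 by norm_num)
      norm_num at h ⊢
      linarith
    rw [Real.rpow_def_of_pos (by norm_num)]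
    nlinarith [Real.add_one_le_exp (Real.log (4 / 3) * (4 * (t - 1)))]
  refine ⟨n + 1, n.succ_pos, ?_, ?_⟩
  · rw [show (3 / 4 : ℝ) = (4 / 3)⁻¹ by norm_num, inv_pow, ← div_eq_mul_inv]
    exact div_le_one_of_le₀ hn2.le (by positivity)
  · calc t ^ (n + 1) ≤ ((4 / 3 : ℝ) ^ (4 * (t - 1))) ^ (n + 1) := by gcongr
      _ = ((4 / 3 : ℝ) ^ (n + 1)) ^ (4 * (t - 1)) := by rw [Real.rpow_pow_comm (by norm_num)]
      _ ≤ (4 / 3 * Y) ^ (4 * (t - 1)) := by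
        have : 0 ≤ 4 * (t - 1) := by linarith
        rw [pow_succ']
        gcongr

theorem half_sub_one_le_mul_rpow {c : ℕ → ℝ} {K l v : ℝ} (ht1 : 1 < t) (ht2 : t ≤ 9 / 8)
    (hK : 1 ≤ K) (hc : ∀ m, |c m| ≤ K * (2 / 3) ^ m) (hcl : ∀ m, 0 ≤ c m + l)
    (hc0 : 1 ≤ c 0 + l) (hv : HasSum (fun m ↦ c m * t ^ m) v) (hvl : v ≤ l / (t - 1)) :
    (t - 1) / 2 ≤ l * (32 / 3 * K) ^ (4 * (t - 1)) := by
  obtain ⟨M, hM, hKM, htM⟩ := exists_pow_le_rpow ht1.le (by linarith : 1 ≤ 8 * K)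
  have hmain := half_sub_one_le_mul_pow ht1 ht2 hc hcl hc0 hv hvl hM hKM
  have hl : 0 ≤ l := nonneg_of_mul_nonneg_left (hmain.trans' (by linarith)) (by positivity)
  calc (t - 1) / 2 ≤ l * t ^ M := hmain
    _ ≤ l * (4 / 3 * (8 * K)) ^ (4 * (t - 1)) := by gcongr
    _ = l * (32 / 3 * K) ^ (4 * (t - 1)) := by ring_nf

end PowerSeries

/-- The entire function `ζ(s) G(s) - G(1) / (s - 1)`, for `G` entire. -/
noncomputable def zetaMulRegularPart (G : ℂ → ℂ) (s : ℂ) : ℂ :=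
  riemannZeta₀ s * G s + dslope G 1 s

section Estermann

variable {G : ℂ → ℂ} {s : ℂ}

theorem riemannZeta_mul_eq (G : ℂ → ℂ) (hs : s ≠ 1) :
    riemannZeta s * G s = zetaMulRegularPart G s + G 1 * (s - 1)⁻¹ := by
  rw [zetaMulRegularPart, riemannZeta_eq_inv_sub_add hs, dslope_of_ne _ hs, slope_def_field]
  ring

theorem differentiable_zetaMulRegularPart (hG : Differentiable ℂ G) :
    Differentiable ℂ (zetaMulRegularPart G) := by
  refine (differentiable_riemannZeta₀.mul hG).add ?_
  rw [← differentiableOn_univ, Complex.differentiableOn_dslope Filter.univ_mem]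
  exact hG.differentiableOn

theorem norm_zetaMulRegularPart_le {Z B : ℝ} (hs : s ∈ Metric.sphere (2 : ℂ) (3 / 2))
    (hZ : ‖riemannZeta s‖ ≤ Z) (hGs : ‖G s‖ ≤ B) (hG1 : ‖G 1‖ ≤ B) :
    ‖zetaMulRegularPart G s‖ ≤ (Z + 2) * B := by
  have hdist : 1 / 2 ≤ ‖s - 1‖ := by
    have h := norm_sub_norm_le (s - 2) (-1)
    rw [mem_sphere_iff_norm.1 hs, show s - 2 - -1 = s - 1 by ring] at h
    norm_num at h
    linarith
  have hs1 : s ≠ 1 := by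
    rintro rfl
    norm_num at hdist
  have hinv : ‖(s - 1)⁻¹‖ ≤ 2 := by
    rw [norm_inv]
    exact inv_le_of_inv_le₀ (by norm_num) (by linarith)
  calc ‖zetaMulRegularPart G s‖ = ‖riemannZeta s * G s - G 1 * (s - 1)⁻¹‖ := by
        rw [riemannZeta_mul_eq G hs1, add_sub_cancel_right]
    _ ≤ ‖riemannZeta s‖ * ‖G s‖ + ‖G 1‖ * ‖(s - 1)⁻¹‖ := by
        simpa only [norm_mul] using norm_sub_le (riemannZeta s * G s) (G 1 * (s - 1)⁻¹)
    _ ≤ Z * B + B * 2 := by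
        gcongr
        exacts [(norm_nonneg _).trans hZ, (norm_nonneg _).trans hG1]
    _ = (Z + 2) * B := by ring

theorem half_one_sub_le_mul_rpow {a : ℕ → ℂ} {K σ : ℝ} (ha : 0 ≤ a) (ha1 : a 1 = 1)
    (hsum : ∀ s : ℂ, 1 < s.re → LSeriesSummable a s) (hG : Differentiable ℂ G)
    (hLG : ∀ s : ℂ, 1 < s.re → LSeries a s = riemannZeta s * G s) (hK1 : 1 ≤ K)
    (hK : ∀ s ∈ Metric.sphere (2 : ℂ) (3 / 2), ‖zetaMulRegularPart G s‖ ≤ K)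
    (hσ1 : 7 / 8 ≤ σ) (hσ2 : σ < 1) (hneg : (riemannZeta σ * G σ).re ≤ 0) :
    (1 - σ) / 2 ≤ (G 1).re * (32 / 3 * K) ^ (4 * (1 - σ)) := by
  have hdiff := differentiable_zetaMulRegularPart hG
  have hcoeff (m : ℕ) : reflectedTaylorCoeff (zetaMulRegularPart G) 2 m + (G 1).re =
      reflectedTaylorCoeff (LSeries a) 2 m := by
    refine (reflectedTaylorCoeff_add_mul_inv_sub_one hdiff ?_ m).symm
    filter_upwards [(isOpen_lt continuous_const continuous_re).mem_nhds
      (show (2 : ℂ) ∈ {s : ℂ | 1 < s.re} by simp)] with s (hs : 1 < s.re)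
    rw [hLG s hs, riemannZeta_mul_eq]
    rintro rfl
    simp at hs
  have habs : LSeries.abscissaOfAbsConv a < (2 : ℝ) :=
    (hsum (3 / 2 : ℝ) (by norm_num)).abscissaOfAbsConv_le.trans_lt
      (EReal.coe_lt_coe (by norm_num))
  have hvalue : (zetaMulRegularPart G (2 - (2 - σ : ℝ))).re ≤ (G 1).re / (2 - σ - 1) := by
    rw [riemannZeta_mul_eq G (mod_cast hσ2.ne), add_re, ← ofReal_one, ← ofReal_sub, ← ofReal_inv,
      re_mul_ofReal, ofReal_one, ← div_eq_mul_inv, ← neg_sub 1 σ, div_neg] at hneg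
    rw [← ofReal_ofNat, ← ofReal_sub, sub_sub_cancel, show 2 - σ - 1 = 1 - σ by ring]
    linarith
  rw [show 1 - σ = 2 - σ - 1 by ring]
  refine half_sub_one_le_mul_rpow (by linarith) (by linarith) hK1 (fun m ↦ ?_) (fun m ↦ ?_) ?_
    (hasSum_reflectedTaylorCoeff hdiff 2 (2 - σ)) hvalue
  · simpa using abs_reflectedTaylorCoeff_le hdiff (by norm_num) hK m
  · rw [hcoeff]
    simpa using reflectedTaylorCoeff_LSeries_nonneg ha habs m
  · rw [hcoeff]
    simpa [reflectedTaylorCoeff, ha1] using le_re_LSeries ha (hsum (2 : ℝ) (by simp))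

end Estermann

/-! ### Lower bounds at `s = 1` -/

section TripleProduct

variable {q q₁ q₂ : ℕ} [NeZero q] [NeZero q₁] [NeZero q₂] {χ : DirichletCharacter ℂ q}
  {χ₁ : DirichletCharacter ℂ q₁} {χ₂ : DirichletCharacter ℂ q₂}

theorem differentiable_tripleLFunction (h₁ : χ₁ ≠ 1) (h₂ : χ₂ ≠ 1) (h₁₂ : χ₁.mul χ₂ ≠ 1) :
    Differentiable ℂ (tripleLFunction χ₁ χ₂) :=
  (DirichletCharacter.differentiable_LFunction h₁).mul <|
    (DirichletCharacter.differentiable_LFunction h₂).mul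
      (DirichletCharacter.differentiable_LFunction h₁₂)

theorem tripleLFunction_ofReal (h₁ : χ₁ ≠ 1) (h₂ : χ₂ ≠ 1) (h₁₂ : χ₁.mul χ₂ ≠ 1)
    (hquad₁ : χ₁.IsQuadratic) (hquad₂ : χ₂.IsQuadratic) (x : ℝ) : tripleLFunction χ₁ χ₂ x =
      ((χ₁.LFunction x).re * ((χ₂.LFunction x).re * ((χ₁.mul χ₂).LFunction x).re) : ℝ) := by
  rw [ofReal_mul, ofReal_mul, ofReal_re_LFunction h₁ hquad₁, ofReal_re_LFunction h₂ hquad₂,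
    ofReal_re_LFunction h₁₂ (isQuadratic_mul hquad₁ hquad₂), tripleLFunction]

theorem norm_LFunction_le_of_mem_closedBall (hχ : χ ≠ 1) {s : ℂ}
    (hs : s ∈ Metric.closedBall (2 : ℂ) (3 / 2)) : ‖χ.LFunction s‖ ≤ 7 * q := by
  rw [mem_closedBall_iff_norm] at hs
  have hre : 1 / 2 ≤ s.re := by
    have h := (abs_re_le_norm (s - 2)).trans hs
    rw [sub_re, re_ofNat, abs_le] at h
    linarith
  have hnorm : ‖s‖ ≤ 7 / 2 := by
    have h := norm_le_norm_add_norm_sub (2 : ℂ) s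
    rw [norm_ofNat, norm_sub_rev] at h
    linarith
  calc ‖χ.LFunction s‖ ≤ ‖s‖ * (q / s.re) := norm_LFunction_le hχ (by linarith)
    _ ≤ 7 / 2 * (q / (1 / 2)) := by gcongr
    _ = 7 * q := by ring

theorem natCast_lcm_le_mul (m n : ℕ) [NeZero m] [NeZero n] : (m.lcm n : ℝ) ≤ m * n :=
  mod_cast Nat.lcm_le_mul (NeZero.pos m) (NeZero.pos n)

theorem norm_tripleLFunction_le (h₁ : χ₁ ≠ 1) (h₂ : χ₂ ≠ 1) (h₁₂ : χ₁.mul χ₂ ≠ 1) {s : ℂ}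
    (hs : s ∈ Metric.closedBall (2 : ℂ) (3 / 2)) :
    ‖tripleLFunction χ₁ χ₂ s‖ ≤ 343 * (q₁ * q₂ : ℝ) ^ 2 := by
  rw [tripleLFunction, norm_mul, norm_mul]
  calc _ ≤ 7 * q₁ * (7 * q₂ * (7 * (q₁.lcm q₂ : ℝ))) := by
        gcongr <;> apply norm_LFunction_le_of_mem_closedBall <;> assumption
    _ ≤ 7 * q₁ * (7 * q₂ * (7 * (q₁ * q₂))) := by gcongr; exact natCast_lcm_le_mul q₁ q₂
    _ = 343 * (q₁ * q₂ : ℝ) ^ 2 := by ring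

theorem exists_norm_riemannZeta_le_of_mem_sphere :
    ∃ Z : ℝ, 0 ≤ Z ∧ ∀ s ∈ Metric.sphere (2 : ℂ) (3 / 2), ‖riemannZeta s‖ ≤ Z := by
  obtain ⟨Z, hZ⟩ := (isCompact_sphere (2 : ℂ) (3 / 2)).exists_bound_of_continuousOn
    (f := riemannZeta) fun s hs ↦ by
      refine (differentiableAt_riemannZeta ?_).continuousAt.continuousWithinAt
      rintro rfl
      norm_num [mem_sphere_iff_norm] at hs
  exact ⟨max Z 0, le_max_right .., fun s hs ↦ (hZ s hs).trans (le_max_left ..)⟩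

theorem exists_half_one_sub_le_tripleLFunction_one : ∃ K : ℝ, 1 ≤ K ∧
    ∀ {q₁ q₂ : ℕ} [NeZero q₁] [NeZero q₂] {χ₁ : DirichletCharacter ℂ q₁}
      {χ₂ : DirichletCharacter ℂ q₂} {σ : ℝ}, χ₁ ≠ 1 → χ₂ ≠ 1 → χ₁.mul χ₂ ≠ 1 →
      χ₁.IsQuadratic → χ₂.IsQuadratic → 7 / 8 ≤ σ → σ < 1 →
      (riemannZeta σ * tripleLFunction χ₁ χ₂ σ).re ≤ 0 →
      (1 - σ) / 2 ≤ (tripleLFunction χ₁ χ₂ 1).re * (K * (q₁ * q₂ : ℝ) ^ 2) ^ (4 * (1 - σ)) := by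
  obtain ⟨Z, hZ0, hZ⟩ := exists_norm_riemannZeta_le_of_mem_sphere
  refine ⟨32 / 3 * ((Z + 2) * 343), by linarith, ?_⟩
  intro q₁ q₂ _ _ χ₁ χ₂ σ h₁ h₂ h₁₂ hquad₁ hquad₂ hσ1 hσ2 hneg
  have hbound {s : ℂ} (hs : s ∈ Metric.closedBall (2 : ℂ) (3 / 2)) :=
    norm_tripleLFunction_le h₁ h₂ h₁₂ hs
  have hq : 1 ≤ (q₁ * q₂ : ℝ) ^ 2 := by
    exact_mod_cast Nat.one_le_pow _ _ (NeZero.pos (q₁ * q₂))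
  rw [mul_assoc (32 / 3 : ℝ), mul_assoc (Z + 2)]
  refine half_one_sub_le_mul_rpow (biquadraticCoeff_nonneg hquad₁ hquad₂)
    (biquadraticCoeff_one χ₁ χ₂) (fun s ↦ LSeriesSummable_biquadraticCoeff χ₁ χ₂)
    (differentiable_tripleLFunction h₁ h₂ h₁₂) (fun s ↦ LSeries_biquadraticCoeff χ₁ χ₂)
    (by nlinarith) (fun s hs ↦ ?_) hσ1 hσ2 hneg
  exact norm_zetaMulRegularPart_le hs (hZ s hs) (hbound (Metric.sphere_subset_closedBall hs))
    (hbound (by rw [mem_closedBall_iff_norm]; norm_num))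

end TripleProduct

section ExceptionalZero

theorem eventually_re_riemannZeta_neg : ∀ᶠ σ : ℝ in 𝓝[<] 1, (riemannZeta σ).re < 0 := by
  have hcont : Continuous fun x : ℝ ↦ (riemannZeta₁ x).re :=
    continuous_re.comp (differentiable_riemannZeta₁.continuous.comp continuous_ofReal)
  have hpos : ∀ᶠ σ : ℝ in 𝓝 1, 0 < (riemannZeta₁ σ).re :=
    hcont.continuousAt.eventually_const_lt (by simp [riemannZeta₁_one])
  filter_upwards [nhdsWithin_le_nhds hpos, self_mem_nhdsWithin] with σ hσ (hσ1 : σ < 1)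
  rw [riemannZeta_eq_inv_sub_mul (mod_cast hσ1.ne), ← ofReal_one, ← ofReal_sub, ← ofReal_inv,
    re_ofReal_mul]
  exact mul_neg_of_neg_of_pos (inv_lt_zero.2 (by linarith)) hσ

theorem exists_isQuadratic_ne_one :
    ∃ χ : DirichletCharacter ℂ 4, χ ≠ 1 ∧ χ.IsQuadratic := by
  refine ⟨ZMod.χ₄.ringHomComp (Int.castRingHom ℂ),
    (MulChar.ringHomComp_ne_one_iff (RingHom.injective_int _)).2 ?_, ZMod.isQuadratic_χ₄.comp _⟩
  exact MulChar.ne_one_iff.2 ⟨-1, by decide⟩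

theorem exists_riemannZeta_mul_tripleLFunction_nonpos {δ : ℝ} (hδ : 0 < δ) :
    ∃ (q₁ : ℕ) (_ : NeZero q₁) (χ₁ : DirichletCharacter ℂ q₁) (σ : ℝ), χ₁ ≠ 1 ∧
      χ₁.IsQuadratic ∧ 1 - δ ≤ σ ∧ σ < 1 ∧
      ∀ {q₂ : ℕ} [NeZero q₂] {χ₂ : DirichletCharacter ℂ q₂}, χ₂ ≠ 1 → χ₁.mul χ₂ ≠ 1 →
        χ₂.IsQuadratic → (riemannZeta σ * tripleLFunction χ₁ χ₂ σ).re ≤ 0 := by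
  by_cases hzero : ∃ (q : ℕ) (_ : NeZero q) (χ : DirichletCharacter ℂ q) (σ : ℝ), χ ≠ 1 ∧
      χ.IsQuadratic ∧ 1 - δ ≤ σ ∧ σ < 1 ∧ χ.LFunction σ = 0
  · obtain ⟨q, hq, χ, σ, hχ, hquad, hσ1, hσ2, hσ⟩ := hzero
    exact ⟨q, hq, χ, σ, hχ, hquad, hσ1, hσ2, fun _ _ _ ↦ by
      simp [tripleLFunction, hσ]⟩
  · obtain ⟨χ₁, h₁, hquad₁⟩ := exists_isQuadratic_ne_one
    obtain ⟨σ, hζ, hσ1, hσ2⟩ := (eventually_re_riemannZeta_neg.and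
      (Ico_mem_nhdsLT (sub_lt_self 1 hδ))).exists
    have hpos {q : ℕ} [NeZero q] {χ : DirichletCharacter ℂ q} (hχ : χ ≠ 1)
        (hquad : χ.IsQuadratic) : 0 < (χ.LFunction σ).re := by
      refine re_LFunction_pos_of_forall_ne_zero hχ hquad fun x hx hLx ↦ ?_
      rcases lt_or_ge x 1 with hx1 | hx1
      · exact hzero ⟨q, _, χ, x, hχ, hquad, hσ1.trans hx, hx1, hLx⟩
      · exact χ.LFunction_ne_zero_of_one_le_re (.inl hχ) (by simpa using hx1) hLx
    refine ⟨4, inferInstance, χ₁, σ, h₁, hquad₁, hσ1, hσ2, fun {q₂} _ χ₂ h₂ h₁₂ hquad₂ ↦ ?_⟩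
    rw [tripleLFunction_ofReal h₁ h₂ h₁₂ hquad₁ hquad₂, re_mul_ofReal]
    have := hpos h₁ hquad₁
    have := hpos h₂ hquad₂
    have := hpos h₁₂ (isQuadratic_mul hquad₁ hquad₂)
    exact mul_nonpos_of_nonpos_of_nonneg hζ.le (by positivity)

end ExceptionalZero

section LowerBound

theorem exists_le_re_LFunction_one_of_le (N : ℕ) : ∃ c : ℝ, 0 < c ∧
    ∀ {q : ℕ} [NeZero q] {χ : DirichletCharacter ℂ q}, q ≤ N → χ ≠ 1 → χ.IsQuadratic →
      c ≤ (χ.LFunction 1).re := by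
  have hev : ∀ᶠ c : ℝ in 𝓝[>] 0, ∀ q ∈ Set.Iic N, ∀ (_ : NeZero q)
      (χ : DirichletCharacter ℂ q), χ ≠ 1 → χ.IsQuadratic → c ≤ (χ.LFunction 1).re := by
    simp only [eventually_all_finite (Set.finite_Iic N), eventually_all]
    intro q _ _ χ hχ hquad
    filter_upwards [nhdsWithin_le_nhds (Iio_mem_nhds (re_LFunction_one_pos hχ hquad))] with c hc
    exact hc.le
  obtain ⟨c, hc, hc0⟩ := (hev.and self_mem_nhdsWithin).exists
  exact ⟨c, hc0, fun {q} _ χ hq ↦ hc q hq _ χ⟩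

theorem exists_one_sub_le_re_LFunction_one {η : ℝ} (hη0 : 0 < η) (hη1 : η ≤ 1) :
    ∃ K : ℝ, 0 < K ∧ ∀ {q₁ q₂ : ℕ} [NeZero q₁] [NeZero q₂] {χ₁ : DirichletCharacter ℂ q₁}
      {χ₂ : DirichletCharacter ℂ q₂} {σ : ℝ}, χ₁ ≠ 1 → χ₂ ≠ 1 → χ₁.mul χ₂ ≠ 1 →
      χ₁.IsQuadratic → χ₂.IsQuadratic → 1 - η / 8 ≤ σ → σ < 1 →
      (riemannZeta σ * tripleLFunction χ₁ χ₂ σ).re ≤ 0 →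
      1 - σ ≤ K * (χ₁.LFunction 1).re * (χ₂.LFunction 1).re * (q₁ * q₂ : ℝ) ^ (2 * η) := by
  obtain ⟨K, hK, hmain⟩ := exists_half_one_sub_le_tripleLFunction_one
  refine ⟨2 * K ^ (η / 2) / η, by positivity, ?_⟩
  intro q₁ q₂ _ _ χ₁ χ₂ σ h₁ h₂ h₁₂ hquad₁ hquad₂ hσ1 hσ2 hneg
  have hbound := hmain h₁ h₂ h₁₂ hquad₁ hquad₂ (by linarith) hσ2 hneg
  have htriple := tripleLFunction_ofReal h₁ h₂ h₁₂ hquad₁ hquad₂ 1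
  rw [ofReal_one] at htriple
  rw [htriple, ofReal_re] at hbound
  have hpos₁ := re_LFunction_one_pos h₁ hquad₁
  have hpos₂ := re_LFunction_one_pos h₂ hquad₂
  have hQ : 1 ≤ (q₁ * q₂ : ℝ) := mod_cast NeZero.pos (q₁ * q₂)
  have hL : ((χ₁.mul χ₂).LFunction 1).re ≤ (q₁ * q₂ : ℝ) ^ η / η := by
    calc _ ≤ ((q₁.lcm q₂ : ℕ) : ℝ) ^ η / η :=
          (re_le_norm _).trans (norm_LFunction_one_le h₁₂ hη0 hη1)
      _ ≤ (q₁ * q₂ : ℝ) ^ η / η := by gcongr; exact natCast_lcm_le_mul q₁ q₂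
  have hpow : (K * (q₁ * q₂ : ℝ) ^ 2) ^ (4 * (1 - σ)) ≤ K ^ (η / 2) * (q₁ * q₂ : ℝ) ^ η := by
    calc _ ≤ (K * (q₁ * q₂ : ℝ) ^ 2) ^ (η / 2) :=
          Real.rpow_le_rpow_of_exponent_le (one_le_mul_of_one_le_of_one_le hK (one_le_pow₀ hQ))
            (by linarith)
      _ = K ^ (η / 2) * (q₁ * q₂ : ℝ) ^ η := by
        rw [Real.mul_rpow (by positivity) (by positivity), ← Real.rpow_natCast_mul (by positivity)]
        ring_nf
  calc 1 - σ ≤ 2 * ((χ₁.LFunction 1).re * ((χ₂.LFunction 1).re *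
        ((q₁ * q₂ : ℝ) ^ η / η)) * (K ^ (η / 2) * (q₁ * q₂ : ℝ) ^ η)) := by
        rw [← div_le_iff₀' two_pos]
        exact hbound.trans (by gcongr)
    _ = 2 * K ^ (η / 2) / η * (χ₁.LFunction 1).re * (χ₂.LFunction 1).re *
        (q₁ * q₂ : ℝ) ^ (2 * η) := by
        rw [two_mul η, Real.rpow_add (by linarith)]
        ring

theorem exists_mul_rpow_le_re_LFunction_one_of_lt {η : ℝ} (hη0 : 0 < η) (hη1 : η ≤ 1) :
    ∃ (N : ℕ) (c : ℝ), 0 < c ∧ ∀ {q : ℕ} [NeZero q] {χ : DirichletCharacter ℂ q}, N < q →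
      χ.IsPrimitive → χ ≠ 1 → χ.IsQuadratic →
      c * (q : ℝ) ^ (-(2 * η)) ≤ (χ.LFunction 1).re := by
  obtain ⟨K, hK, hmain⟩ := exists_one_sub_le_re_LFunction_one hη0 hη1
  obtain ⟨q₁, _, χ₁, σ, h₁, hquad₁, hσ1, hσ2, hneg⟩ :=
    exists_riemannZeta_mul_tripleLFunction_nonpos (δ := η / 8) (by positivity)
  have hq₁ : 0 < (q₁ : ℝ) := mod_cast NeZero.pos q₁
  have hpos₁ := re_LFunction_one_pos h₁ hquad₁
  have : 0 < 1 - σ := sub_pos.2 hσ2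
  refine ⟨q₁, (1 - σ) / (K * (χ₁.LFunction 1).re * (q₁ : ℝ) ^ (2 * η)), by positivity, ?_⟩
  intro q _ χ hq hprim hχ hquad
  have hq0 : 0 < (q : ℝ) := mod_cast NeZero.pos q
  have hmul : χ₁.mul χ ≠ 1 := by
    refine mul_ne_one_of_conductor_ne (ne_of_lt ?_)
    rw [(χ.isPrimitive_def).1 hprim]
    exact (Nat.le_of_dvd (NeZero.pos q₁) χ₁.conductor_dvd_level).trans_lt hq
  have hbound := hmain h₁ hχ hmul hquad₁ hquad hσ1 hσ2 (hneg hχ hmul hquad)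
  rw [Real.rpow_neg hq0.le, ← div_eq_mul_inv, div_div, div_le_iff₀ (by positivity)]
  calc 1 - σ ≤ _ := hbound
    _ = _ := by
      rw [Real.mul_rpow hq₁.le hq0.le]
      ring

theorem exists_mul_rpow_le_re_LFunction_one {ε : ℝ} (hε : 0 < ε) :
    ∃ c : ℝ, 0 < c ∧ ∀ {q : ℕ} [NeZero q] {χ : DirichletCharacter ℂ q}, χ.IsPrimitive →
      χ ≠ 1 → χ.IsQuadratic → c * (q : ℝ) ^ (-ε) ≤ (χ.LFunction 1).re := by
  have hη : 0 < min (ε / 2) 1 := lt_min (half_pos hε) one_pos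
  obtain ⟨N, c, hc, hlarge⟩ := exists_mul_rpow_le_re_LFunction_one_of_lt hη (min_le_right ..)
  obtain ⟨c', hc', hsmall⟩ := exists_le_re_LFunction_one_of_le N
  refine ⟨min c c', lt_min hc hc', fun {q} _ χ hprim hχ hquad ↦ ?_⟩
  have hq1 : 1 ≤ (q : ℝ) := mod_cast NeZero.one_le
  rcases le_or_gt q N with hq | hq
  · calc min c c' * (q : ℝ) ^ (-ε) ≤ c' * 1 := by
          gcongr
          exacts [min_le_right .., Real.rpow_le_one_of_one_le_of_nonpos hq1 (by linarith)]
      _ ≤ (χ.LFunction 1).re := by simpa using hsmall hq hχ hquad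
  · calc min c c' * (q : ℝ) ^ (-ε) ≤ c * (q : ℝ) ^ (-(2 * min (ε / 2) 1)) := by
          gcongr
          exacts [min_le_left .., by linarith [min_le_left (ε / 2) 1]]
      _ ≤ (χ.LFunction 1).re := hlarge hq hprim hχ hquad

end LowerBound

end Siegel

/-- **Siegel's theorem.** For every `ε > 0` there is a constant `C(ε) > 0` such that for
every integer `q > 1` and every primitive quadratic Dirichlet character `χ` mod `q`,
the value `L(1,χ)` is a (positive) real number exceeding `C(ε) * q ^ (-ε)`. -/
theorem siegel_theorem (ε : ℝ) (hε : 0 < ε) :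
    ∃ C : ℝ, 0 < C ∧
      ∀ (q : ℕ) (hq : 1 < q),
        haveI : NeZero q := ⟨by omega⟩
        ∀ χ : DirichletCharacter ℂ q,
          χ.IsPrimitive → χ ≠ 1 → χ ^ 2 = 1 →
            ∃ r : ℝ, χ.LFunction 1 = (r : ℂ) ∧ C * (q : ℝ) ^ (-ε) < r := by
  obtain ⟨c, hc, hbound⟩ := Siegel.exists_mul_rpow_le_re_LFunction_one hε
  refine ⟨c / 2, half_pos hc, fun q hq χ hprim hχ hsq ↦ ?_⟩
  have : NeZero q := ⟨by omega⟩
  have hquad : χ.IsQuadratic := MulChar.isQuadratic_iff_sq_eq_one.2 hsq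
  refine ⟨(χ.LFunction 1).re, ?_, ?_⟩
  · simpa using (Siegel.ofReal_re_LFunction hχ hquad 1).symm
  · calc c / 2 * (q : ℝ) ^ (-ε) < c * (q : ℝ) ^ (-ε) := by
          gcongr
          exact half_lt_self hc
      _ ≤ (χ.LFunction 1).re := hbound hprim hχ hquad
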